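/- Let n be a positive integer and let σ ∈ Sₙ ≀ S₄ be an autoparatopism of some Latin cube of order n. Then there exist β₁,β₂,β₃,β₄ ∈ Sₙ such that σ is conjugate in Sₙ ≀ S₄ to an element of one of the five forms (β₁,β₂,β₃,β₄;ε), (ε,β₂,β₃,β₄;(1 2)), (ε,ε,β₃,β₄;(1 2 3)), (ε,ε,ε,β₄;(1 2 3 4)), or (ε,ε,β₃,β₄;(1 3)(2 4)), and this conjugate element is itself an autoparatopism of some Latin cube of order n. -/

import Mathlib

/-!
Conventions.  In the paper permutations act on the right, whereas Mathlib's
`Equiv.Perm` applies on the left.  We therefore translate the paper's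
application `iδ` as `δ i` and the paper's product `αβ` ("apply `α`, then `β`")
as the Mathlib product `β * α`.  The wreath product `Sₙ ≀ S₄`, whose elements
are tuples `(α₁,α₂,α₃,α₄;δ)` with multiplication
`(α₁,…,α₄;δ)(β₁,…,β₄;ρ) = (α₁β₍₁δ₎,…,α₄β₍₄δ₎;δρ)`,
is modelled by `WreathS4` below (components indexed by `Fin 4`, so paper index
`i` is `i-1` here); the multiplication `σ * τ` of `WreathS4` is exactly the
paper's product `στ`, translated to left-acting permutations.
-/

structure WreathS4 (n : ℕ) where
  comp : Fin 4 → Equiv.Perm (Fin n)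
  base : Equiv.Perm (Fin 4)

namespace WreathS4

variable {n : ℕ}

lemma ext_of {σ τ : WreathS4 n} (h1 : σ.comp = τ.comp) (h2 : σ.base = τ.base) :
    σ = τ := by
  cases σ; cases τ; cases h1; cases h2; rfl

instance : One (WreathS4 n) := ⟨⟨fun _ => 1, 1⟩⟩
instance : Mul (WreathS4 n) :=
  ⟨fun σ τ => ⟨fun i => τ.comp (σ.base i) * σ.comp i, τ.base * σ.base⟩⟩
instance : Inv (WreathS4 n) :=
  ⟨fun σ => ⟨fun i => (σ.comp (σ.base⁻¹ i))⁻¹, σ.base⁻¹⟩⟩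

@[simp] lemma one_comp (i : Fin 4) : (1 : WreathS4 n).comp i = 1 := rfl
@[simp] lemma one_base : (1 : WreathS4 n).base = 1 := rfl
@[simp] lemma mul_comp (σ τ : WreathS4 n) (i : Fin 4) :
    (σ * τ).comp i = τ.comp (σ.base i) * σ.comp i := rfl
@[simp] lemma mul_base (σ τ : WreathS4 n) : (σ * τ).base = τ.base * σ.base := rfl
@[simp] lemma inv_comp (σ : WreathS4 n) (i : Fin 4) :
    (σ⁻¹).comp i = (σ.comp (σ.base⁻¹ i))⁻¹ := rfl
@[simp] lemma inv_base (σ : WreathS4 n) : (σ⁻¹).base = σ.base⁻¹ := rfl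

instance : Group (WreathS4 n) where
  mul_assoc a b c := ext_of (funext fun i => by simp [mul_assoc]) (mul_assoc _ _ _).symm
  one_mul a := ext_of (funext fun i => by simp) (by simp)
  mul_one a := ext_of (funext fun i => by simp) (by simp)
  inv_mul_cancel a := ext_of (funext fun i => by simp) (by simp)

end WreathS4

/-- A Latin cube of order `n`: a map `C : [n]³ → [n]` such that along each of
the `3n²` lines (fixing two coordinates) the entries form a bijection onto `[n]`. -/
def IsLatinCube {n : ℕ} (C : Fin n → Fin n → Fin n → Fin n) : Prop :=
  (∀ j k, Function.Bijective fun i => C i j k) ∧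
  (∀ i k, Function.Bijective fun j => C i j k) ∧
  (∀ i j, Function.Bijective fun k => C i j k)

/-- The orthogonal array `O(C) = {(i,j,k,C(i,j,k))}` of a cube, as a set of
quadruples `Fin 4 → Fin n`. -/
def OA {n : ℕ} (C : Fin n → Fin n → Fin n → Fin n) : Set (Fin 4 → Fin n) :=
  {x | ∃ i j k, x = ![i, j, k, C i j k]}

/-- The action of `σ = (α₁,α₂,α₃,α₄;δ)` on a quadruple: first each entry `xᵢ`
is replaced by `xᵢαᵢ`, then positions are permuted by `δ`; the image `y`
satisfies `y₍ᵢδ₎ = xᵢαᵢ`, i.e. `y j = α₍δ⁻¹ j₎ (x (δ⁻¹ j))`. -/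
def actQ {n : ℕ} (σ : WreathS4 n) (x : Fin 4 → Fin n) : Fin 4 → Fin n :=
  fun j => σ.comp (σ.base⁻¹ j) (x (σ.base⁻¹ j))

/-- `σ` is an autoparatopism of `C` when the induced action on the orthogonal
array fixes it setwise, i.e. `C^σ = C`. -/
def IsAutoparatopism {n : ℕ} (σ : WreathS4 n) (C : Fin n → Fin n → Fin n → Fin n) : Prop :=
  (actQ σ) '' OA C = OA C

namespace WreathS4

/-- Symmetric description of orthogonal arrays of Latin cubes: any three coordinates
determine a unique quadruple. -/
def IsLatinSet {n : ℕ} (S : Set (Fin 4 → Fin n)) : Prop :=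
  ∀ (p : Fin 4) (y : Fin 4 → Fin n), ∃! x, x ∈ S ∧ ∀ q, q ≠ p → x q = y q

lemma actQ_mul {n : ℕ} (σ τ : WreathS4 n) (x : Fin 4 → Fin n) :
    actQ (σ * τ) x = actQ τ (actQ σ x) := by
  funext j
  simp [actQ, mul_inv_rev]

lemma actQ_apply_base {n : ℕ} (σ : WreathS4 n) (x : Fin 4 → Fin n) (i : Fin 4) :
    actQ σ x (σ.base i) = σ.comp i (x i) := by
  simp [actQ]

lemma actQ_one {n : ℕ} (x : Fin 4 → Fin n) : actQ (1 : WreathS4 n) x = x := by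
  funext j
  simp [actQ]

lemma actQ_inv_left {n : ℕ} (σ : WreathS4 n) (x : Fin 4 → Fin n) :
    actQ σ⁻¹ (actQ σ x) = x := by
  rw [← actQ_mul, mul_inv_cancel, actQ_one]

lemma actQ_inv_right {n : ℕ} (σ : WreathS4 n) (x : Fin 4 → Fin n) :
    actQ σ (actQ σ⁻¹ x) = x := by
  rw [← actQ_mul, inv_mul_cancel, actQ_one]

lemma isLatinSet_OA {n : ℕ} {C : Fin n → Fin n → Fin n → Fin n} (hC : IsLatinCube C) :
    IsLatinSet (OA C) := by
  obtain ⟨h0, h1, h2⟩ := hC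
  intro p y
  fin_cases p
  · obtain ⟨i, hi, hu⟩ := (h0 (y 1) (y 2)).existsUnique (y 3)
    refine ⟨![i, y 1, y 2, y 3], ⟨⟨i, y 1, y 2, ?_⟩, ?_⟩, ?_⟩
    · rw [← hi]
    · intro q hq; fin_cases q <;> simp at hq ⊢
    · rintro x ⟨⟨a, b, c, rfl⟩, hx⟩
      have e1 := hx 1 (by decide)
      have e2 := hx 2 (by decide)
      have e3 := hx 3 (by decide)
      simp at e1 e2 e3
      subst e1 e2
      have := hu a e3
      subst this
      rw [← e3]
  · obtain ⟨i, hi, hu⟩ := (h1 (y 0) (y 2)).existsUnique (y 3)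
    refine ⟨![y 0, i, y 2, y 3], ⟨⟨y 0, i, y 2, ?_⟩, ?_⟩, ?_⟩
    · rw [← hi]
    · intro q hq; fin_cases q <;> simp at hq ⊢
    · rintro x ⟨⟨a, b, c, rfl⟩, hx⟩
      have e1 := hx 0 (by decide)
      have e2 := hx 2 (by decide)
      have e3 := hx 3 (by decide)
      simp at e1 e2 e3
      subst e1 e2
      have := hu b e3
      subst this
      rw [← e3]
  · obtain ⟨i, hi, hu⟩ := (h2 (y 0) (y 1)).existsUnique (y 3)
    refine ⟨![y 0, y 1, i, y 3], ⟨⟨y 0, y 1, i, ?_⟩, ?_⟩, ?_⟩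
    · rw [← hi]
    · intro q hq; fin_cases q <;> simp at hq ⊢
    · rintro x ⟨⟨a, b, c, rfl⟩, hx⟩
      have e1 := hx 0 (by decide)
      have e2 := hx 1 (by decide)
      have e3 := hx 3 (by decide)
      simp at e1 e2 e3
      subst e1 e2
      have := hu c e3
      subst this
      rw [← e3]
  · refine ⟨![y 0, y 1, y 2, C (y 0) (y 1) (y 2)], ⟨⟨_, _, _, rfl⟩, ?_⟩, ?_⟩
    · intro q hq; fin_cases q <;> simp at hq ⊢
    · rintro x ⟨⟨a, b, c, rfl⟩, hx⟩
      have e1 := hx 0 (by decide)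
      have e2 := hx 1 (by decide)
      have e3 := hx 2 (by decide)
      simp at e1 e2 e3
      subst e1 e2 e3
      rfl

lemma exists_cube {n : ℕ} {S : Set (Fin 4 → Fin n)} (hS : IsLatinSet S) :
    ∃ D, IsLatinCube D ∧ OA D = S := by
  choose f hf hu using hS
  have hmem : ∀ i j k v, ![i, j, k, f 3 ![i, j, k, v] 3] = f 3 ![i, j, k, v] := by
    intro i j k v
    have h := (hf 3 ![i, j, k, v]).2
    have e0 := h 0 (by decide)
    have e1 := h 1 (by decide)
    have e2 := h 2 (by decide)
    funext q
    fin_cases q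
    · exact e0.symm
    · exact e1.symm
    · exact e2.symm
    · rfl
  let D : Fin n → Fin n → Fin n → Fin n := fun i j k => f 3 ![i, j, k, i] 3
  have hD : ∀ i j k, ![i, j, k, D i j k] ∈ S := by
    intro i j k
    have := (hf 3 ![i, j, k, i]).1
    rw [← hmem] at this
    exact this
  have huD : ∀ x ∈ S, D (x 0) (x 1) (x 2) = x 3 := by
    intro x hx
    have h := hu 3 ![x 0, x 1, x 2, x 0] x ⟨hx, by
      intro q hq; fin_cases q <;> simp at hq ⊢⟩
    exact (congrFun h 3).symm
  refine ⟨D, ⟨?_, ?_, ?_⟩, ?_⟩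
  · intro j k
    apply Finite.injective_iff_bijective.mp
    intro a b hab
    have ha := hu 0 ![a, j, k, D a j k] _ ⟨hD a j k, fun _ _ => rfl⟩
    have hb := hu 0 ![a, j, k, D a j k] _ ⟨hD b j k, by
      intro q hq; fin_cases q <;> simp at hq ⊢; exact hab.symm⟩
    exact congrFun (ha.trans hb.symm) 0
  · intro j k
    apply Finite.injective_iff_bijective.mp
    intro a b hab
    have ha := hu 1 ![j, a, k, D j a k] _ ⟨hD j a k, fun _ _ => rfl⟩
    have hb := hu 1 ![j, a, k, D j a k] _ ⟨hD j b k, by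
      intro q hq; fin_cases q <;> simp at hq ⊢; exact hab.symm⟩
    exact congrFun (ha.trans hb.symm) 1
  · intro j k
    apply Finite.injective_iff_bijective.mp
    intro a b hab
    have ha := hu 2 ![j, k, a, D j k a] _ ⟨hD j k a, fun _ _ => rfl⟩
    have hb := hu 2 ![j, k, a, D j k a] _ ⟨hD j k b, by
      intro q hq; fin_cases q <;> simp at hq ⊢; exact hab.symm⟩
    exact congrFun (ha.trans hb.symm) 2
  · ext x
    constructor
    · rintro ⟨i, j, k, rfl⟩
      exact hD i j k
    · intro hx
      refine ⟨x 0, x 1, x 2, ?_⟩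
      rw [huD x hx]
      funext q
      fin_cases q <;> rfl

lemma IsLatinSet.image {n : ℕ} {S : Set (Fin 4 → Fin n)} (hS : IsLatinSet S) (τ : WreathS4 n) :
    IsLatinSet (actQ τ '' S) := by
  intro p y
  have key : ∀ x : Fin 4 → Fin n, (∀ q, q ≠ τ.base⁻¹ p → x q = actQ τ⁻¹ y q) ↔
      ∀ q, q ≠ p → actQ τ x q = y q := by
    intro x
    constructor
    · intro h q hq
      have := h (τ.base⁻¹ q) (fun e => hq (τ.base⁻¹.injective e))
      have h2 := actQ_apply_base τ x (τ.base⁻¹ q)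
      rw [this, ← actQ_apply_base, actQ_inv_right] at h2
      simpa using h2
    · intro h q hq
      have := h (τ.base q) (fun e => hq (by rw [← e]; simp))
      rw [actQ_apply_base] at this
      apply (τ.comp q).injective
      rw [this, ← actQ_apply_base, actQ_inv_right]
  obtain ⟨x, ⟨hx, hxy⟩, hu⟩ := hS (τ.base⁻¹ p) (actQ τ⁻¹ y)
  refine ⟨actQ τ x, ⟨⟨x, hx, rfl⟩, (key x).1 hxy⟩, ?_⟩
  rintro _ ⟨⟨z, hz, rfl⟩, h⟩
  rw [hu z ⟨hz, (key z).2 h⟩]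

lemma auto_conj {n : ℕ} {σ σ' : WreathS4 n} (hc : IsConj σ σ')
    (h : ∃ C : Fin n → Fin n → Fin n → Fin n, IsLatinCube C ∧ IsAutoparatopism σ C) :
    ∃ D : Fin n → Fin n → Fin n → Fin n, IsLatinCube D ∧ IsAutoparatopism σ' D := by
  obtain ⟨C, hC, hA⟩ := h
  obtain ⟨c, rfl⟩ := isConj_iff.1 hc
  obtain ⟨D, hD, hDS⟩ := exists_cube ((isLatinSet_OA hC).image c⁻¹)
  refine ⟨D, hD, ?_⟩
  unfold IsAutoparatopism at hA ⊢
  rw [hDS]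
  conv_rhs => rw [← hA]
  rw [Set.image_image, Set.image_image]
  apply Set.image_congr
  intro x _
  rw [actQ_mul, actQ_mul, actQ_inv_right]

lemma base_conj : ∀ δ : Equiv.Perm (Fin 4), ∃ ρ : Equiv.Perm (Fin 4),
    ρ * δ * ρ⁻¹ = 1 ∨ ρ * δ * ρ⁻¹ = Equiv.swap 0 1 ∨
    ρ * δ * ρ⁻¹ = Equiv.swap 0 2 * Equiv.swap 0 1 ∨
    ρ * δ * ρ⁻¹ = Equiv.swap 0 3 * Equiv.swap 0 2 * Equiv.swap 0 1 ∨
    ρ * δ * ρ⁻¹ = Equiv.swap 0 2 * Equiv.swap 1 3 := by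
  decide +kernel

lemma conj_diag {n : ℕ} (α t : Fin 4 → Equiv.Perm (Fin n)) (δ : Equiv.Perm (Fin 4)) :
    IsConj (WreathS4.mk α δ) (WreathS4.mk (fun i => t (δ i) * α i * (t i)⁻¹) δ) := by
  rw [isConj_iff]
  refine ⟨(WreathS4.mk t 1)⁻¹, ext_of (funext fun i => ?_) ?_⟩
  · simp [mul_assoc]
  · simp

lemma conj_base {n : ℕ} (σ : WreathS4 n) (ρ : Equiv.Perm (Fin 4)) :
    ∃ α, IsConj σ (WreathS4.mk α (ρ * σ.base * ρ⁻¹)) := by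
  let c : WreathS4 n := (WreathS4.mk (fun _ => 1) ρ)⁻¹
  refine ⟨(c * σ * c⁻¹).comp, isConj_iff.2 ⟨c, ext_of rfl ?_⟩⟩
  simp [c, mul_assoc]

lemma normal_form {n : ℕ} (σ : WreathS4 n) :
    ∃ (β₁ β₂ β₃ β₄ : Equiv.Perm (Fin n)) (σ' : WreathS4 n),
      (σ' = WreathS4.mk ![β₁, β₂, β₃, β₄] 1 ∨
       σ' = WreathS4.mk ![1, β₂, β₃, β₄] (Equiv.swap 0 1) ∨
       σ' = WreathS4.mk ![1, 1, β₃, β₄] (Equiv.swap 0 2 * Equiv.swap 0 1) ∨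
       σ' = WreathS4.mk ![1, 1, 1, β₄] (Equiv.swap 0 3 * Equiv.swap 0 2 * Equiv.swap 0 1) ∨
       σ' = WreathS4.mk ![1, 1, β₃, β₄] (Equiv.swap 0 2 * Equiv.swap 1 3)) ∧
      IsConj σ σ' := by
  obtain ⟨ρ, hρ⟩ := base_conj σ.base
  obtain ⟨α, hα⟩ := conj_base σ ρ
  generalize ρ * σ.base * ρ⁻¹ = δ at hρ hα
  have vec : ∀ f : Fin 4 → Equiv.Perm (Fin n), f = ![f 0, f 1, f 2, f 3] := by
    intro f; funext q; fin_cases q <;> rfl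
  -- it suffices to choose the diagonal conjugator
  have key : ∀ t : Fin 4 → Equiv.Perm (Fin n), ∃ f : Fin 4 → Equiv.Perm (Fin n),
      (∀ i, f i = t (δ i) * α i * (t i)⁻¹) ∧
      IsConj σ (WreathS4.mk ![f 0, f 1, f 2, f 3] δ) := by
    intro t
    refine ⟨fun i => t (δ i) * α i * (t i)⁻¹, fun _ => rfl, ?_⟩
    have := hα.trans (conj_diag α t δ)
    rwa [vec fun i => t (δ i) * α i * (t i)⁻¹] at this
  rcases hρ with h | h | h | h | h
  · subst h
    exact ⟨_, _, _, _, _, Or.inl (congrArg (fun f => WreathS4.mk f 1) (vec α)), hα⟩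
  · obtain ⟨f, hf, hc⟩ := key ![1, (α 0)⁻¹, 1, 1]
    have d0 : δ 0 = 1 := by rw [h]; decide
    have e0 : f 0 = 1 := by rw [hf, d0]; simp
    rw [h, e0] at hc
    exact ⟨1, f 1, f 2, f 3, _, Or.inr (Or.inl rfl), hc⟩
  · obtain ⟨f, hf, hc⟩ := key ![1, (α 0)⁻¹, (α 0)⁻¹ * (α 1)⁻¹, 1]
    have d0 : δ 0 = 1 := by rw [h]; decide
    have e0 : f 0 = 1 := by rw [hf, d0]; simp
    have d1 : δ 1 = 2 := by rw [h]; decide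
    have e1 : f 1 = 1 := by rw [hf, d1]; simp
    rw [h, e0, e1] at hc
    exact ⟨1, 1, f 2, f 3, _, Or.inr (Or.inr (Or.inl rfl)), hc⟩
  · obtain ⟨f, hf, hc⟩ := key ![1, (α 0)⁻¹, (α 0)⁻¹ * (α 1)⁻¹, (α 0)⁻¹ * (α 1)⁻¹ * (α 2)⁻¹]
    have d0 : δ 0 = 1 := by rw [h]; decide
    have e0 : f 0 = 1 := by rw [hf, d0]; simp
    have d1 : δ 1 = 2 := by rw [h]; decide
    have e1 : f 1 = 1 := by rw [hf, d1]; simp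
    have d2 : δ 2 = 3 := by rw [h]; decide
    have e2 : f 2 = 1 := by rw [hf, d2]; simp
    rw [h, e0, e1, e2] at hc
    exact ⟨1, 1, 1, f 3, _, Or.inr (Or.inr (Or.inr (Or.inl rfl))), hc⟩
  · obtain ⟨f, hf, hc⟩ := key ![1, 1, (α 0)⁻¹, (α 1)⁻¹]
    have d0 : δ 0 = 2 := by rw [h]; decide
    have e0 : f 0 = 1 := by rw [hf, d0]; simp
    have d1 : δ 1 = 3 := by rw [h]; decide
    have e1 : f 1 = 1 := by rw [hf, d1]; simp
    rw [h, e0, e1] at hc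
    exact ⟨1, 1, f 2, f 3, _, Or.inr (Or.inr (Or.inr (Or.inr rfl))), hc⟩

end WreathS4

/-- Every autoparatopism `σ` of a Latin cube of order `n` is conjugate in
`Sₙ ≀ S₄` to an element `σ'` of one of the five normal forms
`(β₁,β₂,β₃,β₄;ε)`, `(ε,β₂,β₃,β₄;(1 2))`, `(ε,ε,β₃,β₄;(1 2 3))`,
`(ε,ε,ε,β₄;(1 2 3 4))`, `(ε,ε,β₃,β₄;(1 3)(2 4))` (0-indexed as below), and
`σ'` is itself an autoparatopism of some Latin cube of order `n`. -/
theorem autoparatopism_normal_form (n : ℕ) (hn : 0 < n) (σ : WreathS4 n)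
    (h : ∃ C : Fin n → Fin n → Fin n → Fin n, IsLatinCube C ∧ IsAutoparatopism σ C) :
    ∃ (β₁ β₂ β₃ β₄ : Equiv.Perm (Fin n)) (σ' : WreathS4 n),
      (σ' = WreathS4.mk ![β₁, β₂, β₃, β₄] 1 ∨
       σ' = WreathS4.mk ![1, β₂, β₃, β₄] (Equiv.swap 0 1) ∨
       σ' = WreathS4.mk ![1, 1, β₃, β₄] (Equiv.swap 0 2 * Equiv.swap 0 1) ∨
       σ' = WreathS4.mk ![1, 1, 1, β₄] (Equiv.swap 0 3 * Equiv.swap 0 2 * Equiv.swap 0 1) ∨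
       σ' = WreathS4.mk ![1, 1, β₃, β₄] (Equiv.swap 0 2 * Equiv.swap 1 3)) ∧
      IsConj σ σ' ∧
      ∃ D : Fin n → Fin n → Fin n → Fin n, IsLatinCube D ∧ IsAutoparatopism σ' D := by
  obtain ⟨β₁, β₂, β₃, β₄, σ', hf, hc⟩ := WreathS4.normal_form σ
  exact ⟨β₁, β₂, β₃, β₄, σ', hf, hc, WreathS4.auto_conj hc h⟩
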